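/- arXiv:2312.15431 — 6 statements merged into one kernel-verified Lean document; each statement's English description precedes it below -/
import Mathlib

section
/- Willems' fundamental lemma: Suppose the discrete-time LTI system x(k+1)=Ax(k)+Bu(k), y(k)=Cx(k)+Du(k) is controllable, i.e. the controllability matrix [B, AB, ..., A^{n-1}B] has rank n. Let (u_d, y_d) be a length-T input/output trajectory of the system, and suppose u_d is persistently exciting of order L+n, i.e. the Hankel matrix H_{L+n}(u_d) of depth L+n has full row rank m(L+n). Then a length-L input/output pair (u_s, y_s), viewed as stacked vectors u_s ∈ ℝ^{mL} and y_s ∈ ℝ^{pL}, is a trajectory of the system if and only if there exists g ∈ ℝ^{T-L+1} such that H_L(u_d) g = u_s and H_L(y_d) g = y_s. -/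
/-!
The set of length-`L` trajectories is the image of `ℝⁿ × ℝ^{mL}` under the linear map sending an
initial state and an input to the resulting input/output pair. Combining the windows
`(u_d(j + ·), y_d(j + ·))` with weights `g` gives the trajectory with initial state `∑ g_j x(j)` and
input `H_L(u_d) g`, so everything reduces to the surjectivity of `g ↦ (∑ g_j x(j), H_L(u_d) g)`,
i.e. to the stacked matrix `[X; H_L(u_d)]` having trivial left kernel.

Let `(ξ, η)` be in that left kernel. Define the sequence
`e = (η_{L-1}, …, η_0, ξB, ξAB, ξA²B, …)` (`annSeq`). Substituting the state equation `k` times gives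
`ξ Aᵏ x(j) + ∑_{l < L+k} e(L+k-1-l) · u(j+l) = 0` (`shifted_annihilator`). Weighting these relations
for `k = 0, …, n` with the coefficients `a_k` of the characteristic polynomial of `A` removes the
state by Cayley–Hamilton and leaves an element of the left kernel of `H_{L+n}(u_d)`, which must
vanish. Its entries form a triangular system with unit diagonal (`a_n = 1`) in
`e(0), …, e(L+n-1)`, so these are zero (`annSeq_eq_zero`); that is, `η = 0` and `ξ Aᵏ B = 0` for
`k < n`, and controllability gives `ξ = 0` (`left_kernel_trivial`).
-/


open Matrix

noncomputable section

/-- Hankel matrix of depth `L` of a length-`T` signal with values in `ℝ^qd`: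
`qL × (T-L+1)` matrix with `(i,j)` block entry `ω (i+j)`. -/
def Hankel {T L qd : ℕ} (hLT : L ≤ T) (ω : Fin T → Fin qd → ℝ) :
    Matrix (Fin L × Fin qd) (Fin (T - L + 1)) ℝ :=
  Matrix.of fun ia j =>
    ω ⟨ia.1.1 + j.1, by have h1 := ia.1.isLt; have h2 := j.isLt; omega⟩ ia.2

/-- `(u, y)` is a length-`T` input/output trajectory of the LTI system `(A, B, C, D)`. -/
def IsTrajectory {n m p T : ℕ}
    (A : Matrix (Fin n) (Fin n) ℝ) (B : Matrix (Fin n) (Fin m) ℝ)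
    (C : Matrix (Fin p) (Fin n) ℝ) (D : Matrix (Fin p) (Fin m) ℝ)
    (u : Fin T → Fin m → ℝ) (y : Fin T → Fin p → ℝ) : Prop :=
  ∃ x : Fin (T + 1) → Fin n → ℝ,
    ∀ k : Fin T,
      x k.succ = A.mulVec (x k.castSucc) + B.mulVec (u k) ∧
      y k = C.mulVec (x k.castSucc) + D.mulVec (u k)

/-- Controllability matrix `[B, AB, ..., A^{n-1}B]`. -/
def ctrbMat {n m : ℕ} (A : Matrix (Fin n) (Fin n) ℝ) (B : Matrix (Fin n) (Fin m) ℝ) :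
    Matrix (Fin n) (Fin n × Fin m) ℝ :=
  Matrix.of fun i kj => (A ^ (kj.1 : ℕ) * B) i kj.2

lemma eq_zero_of_vecMul_eq_zero_of_rank {ι κ : Type*} [Fintype ι] [Fintype κ]
    (M : Matrix ι κ ℝ) (h : M.rank = Fintype.card ι) (v : ι → ℝ) (hv : v ᵥ* M = 0) : v = 0 := by
  have hli : LinearIndependent ℝ M.row := by
    rw [linearIndependent_iff_card_eq_finrank_span, ← h, Matrix.rank_eq_finrank_span_row]
    rfl
  exact (Matrix.vecMul_injective_iff.mpr hli) (by simpa using hv)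

lemma mulVec_surjective_of_left_kernel {ι κ : Type*} [Fintype ι] [Fintype κ]
    (M : Matrix ι κ ℝ) (h : ∀ v, v ᵥ* M = 0 → v = 0) : Function.Surjective M.mulVec := by
  have hinj : Function.Injective M.vecMul := by
    intro v w hvw
    have := h (v - w) (by simpa [Matrix.sub_vecMul, sub_eq_zero] using hvw)
    exact sub_eq_zero.mp this
  have hli := Matrix.vecMul_injective_iff.mp hinj
  have hr : M.rank = Fintype.card ι := hli.rank_matrix
  have : LinearMap.range M.mulVecLin = ⊤ := by
    apply Submodule.eq_top_of_finrank_eq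
    rw [Module.finrank_fintype_fun_eq_card]
    exact hr
  exact LinearMap.range_eq_top.mp this

/-- The sequence `η_{L-1}, …, η_0, ξB, ξAB, ξA²B, …` attached to a left annihilator `(ξ, η)` of the
stacked state/input data matrix. -/
def annSeq {n m : ℕ} (A : Matrix (Fin n) (Fin n) ℝ) (B : Matrix (Fin n) (Fin m) ℝ) (L : ℕ)
    (ξ : Fin n → ℝ) (η : ℕ → Fin m → ℝ) (s : ℕ) : Fin m → ℝ :=
  if s < L then η (L - 1 - s) else ξ ᵥ* (A ^ (s - L) * B)

/-- The state equation substituted `k` times into the annihilation relation: every window shift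
appends one further term of `annSeq`. -/
lemma shifted_annihilator {n m N L : ℕ}
    (A : Matrix (Fin n) (Fin n) ℝ) (B : Matrix (Fin n) (Fin m) ℝ)
    (ξ : Fin n → ℝ) (η : ℕ → Fin m → ℝ) (x : ℕ → Fin n → ℝ) (u : ℕ → Fin m → ℝ)
    (hx : ∀ j < N, x (j + 1) = A *ᵥ x j + B *ᵥ u j)
    (hann : ∀ j ≤ N, ξ ⬝ᵥ x j + ∑ l ∈ Finset.range L, η l ⬝ᵥ u (j + l) = 0)
    (k j : ℕ) (hj : j + k ≤ N) :
    (ξ ᵥ* A ^ k) ⬝ᵥ x j +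
      ∑ l ∈ Finset.range (L + k), annSeq A B L ξ η (L + k - 1 - l) ⬝ᵥ u (j + l) = 0 := by
  induction k generalizing j with
  | zero =>
    rw [← hann j (by omega)]
    simp only [pow_zero, Matrix.vecMul_one, add_zero]
    congr 1
    refine Finset.sum_congr rfl fun l hl => ?_
    have := Finset.mem_range.mp hl
    rw [annSeq, if_pos (by omega), show L - 1 - (L - 1 - l) = l by omega]
  | succ k ih =>
    have h := ih (j + 1) (by omega)
    rw [hx j (by omega)] at h
    rw [← h, ← add_assoc L k 1, Finset.sum_range_succ']
    have e1 : annSeq A B L ξ η (L + k + 1 - 1 - 0) = ξ ᵥ* (A ^ k * B) := by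
      simp [annSeq]
    have e2 : ∀ l, annSeq A B L ξ η (L + k + 1 - 1 - (l + 1)) ⬝ᵥ u (j + (l + 1))
        = annSeq A B L ξ η (L + k - 1 - l) ⬝ᵥ u (j + 1 + l) := by
      intro l
      congr 2 <;> omega
    simp only [e1, e2]
    rw [dotProduct_add, Matrix.dotProduct_mulVec, Matrix.dotProduct_mulVec, Matrix.vecMul_vecMul,
      Matrix.vecMul_vecMul, ← pow_succ]
    simp only [add_zero]
    ring

/-- Persistency of excitation (`hpe`, as triviality of the left kernel of the depth-`(L+n)` Hankel
matrix) kills the first `L + n` terms of `annSeq`. -/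
lemma annSeq_eq_zero {n m N L : ℕ}
    (A : Matrix (Fin n) (Fin n) ℝ) (B : Matrix (Fin n) (Fin m) ℝ)
    (ξ : Fin n → ℝ) (η : ℕ → Fin m → ℝ) (x : ℕ → Fin n → ℝ) (u : ℕ → Fin m → ℝ)
    (hx : ∀ j < N, x (j + 1) = A *ᵥ x j + B *ᵥ u j)
    (hann : ∀ j ≤ N, ξ ⬝ᵥ x j + ∑ l ∈ Finset.range L, η l ⬝ᵥ u (j + l) = 0)
    (hpe : ∀ v : ℕ → Fin m → ℝ,
      (∀ j, j + n ≤ N → ∑ l ∈ Finset.range (L + n), v l ⬝ᵥ u (j + l) = 0) →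
      ∀ l < L + n, v l = 0)
    (r : ℕ) (hr : r < L + n) : annSeq A B L ξ η r = 0 := by
  set e := annSeq A B L ξ η with he
  set a : ℕ → ℝ := fun k => A.charpoly.coeff k with ha
  have hdeg : A.charpoly.natDegree = n := by simp
  have han : a n = 1 := by
    have := A.charpoly_monic.coeff_natDegree
    rwa [hdeg] at this
  have hCH : ∑ k ∈ Finset.range (n + 1), a k • A ^ k = 0 := by
    have := A.aeval_self_charpoly
    rwa [Polynomial.aeval_eq_sum_range, hdeg] at this
  -- The state-free combination of the shifted relations, as a row of depth `L + n`.
  have hv := hpe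
    (fun l => ∑ k ∈ Finset.range (n + 1), if l < L + k then a k • e (L + k - 1 - l) else 0) (by
    intro j hj
    have hk : ∀ k ∈ Finset.range (n + 1), a k * ((ξ ᵥ* A ^ k) ⬝ᵥ x j) +
        ∑ l ∈ Finset.range (L + n),
          (if l < L + k then a k • e (L + k - 1 - l) else 0) ⬝ᵥ u (j + l) = 0 := by
      intro k hk
      have hk' := Finset.mem_range.mp hk
      have h := shifted_annihilator A B ξ η x u hx hann k j (by omega)
      have hs : ∑ l ∈ Finset.range (L + n),
          (if l < L + k then a k • e (L + k - 1 - l) else 0) ⬝ᵥ u (j + l)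
          = a k * ∑ l ∈ Finset.range (L + k), e (L + k - 1 - l) ⬝ᵥ u (j + l) := by
        rw [Finset.mul_sum, ← Finset.sum_subset
          (Finset.range_subset_range.mpr (show L + k ≤ L + n by omega))]
        · refine Finset.sum_congr rfl fun l hl => ?_
          rw [if_pos (Finset.mem_range.mp hl), smul_dotProduct, smul_eq_mul]
        · intro l _ hl
          rw [if_neg (by simpa using hl), zero_dotProduct]
      rw [hs, ← mul_add, h, mul_zero]
    have hsum := Finset.sum_eq_zero hk
    rw [Finset.sum_add_distrib] at hsum
    have hstate : ∑ k ∈ Finset.range (n + 1), a k * ((ξ ᵥ* A ^ k) ⬝ᵥ x j) = 0 := by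
      have h0 : (∑ k ∈ Finset.range (n + 1), a k • A ^ k) *ᵥ x j = 0 := by
        rw [hCH, Matrix.zero_mulVec]
      have h1 := congrArg (fun w => ξ ⬝ᵥ w) h0
      simp only [Matrix.sum_mulVec, dotProduct_sum, Matrix.smul_mulVec, dotProduct_smul,
        dotProduct_zero, smul_eq_mul, Matrix.dotProduct_mulVec] at h1
      exact h1
    rw [hstate, zero_add, Finset.sum_comm] at hsum
    simpa only [sum_dotProduct] using hsum)
  induction r using Nat.strong_induction_on with
  | _ r ih =>
    -- Entry `L + n - 1 - r` involves only `e(r + k - n)` for `k ≤ n`; the coefficient of `e(r)` is 1.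
    have h := hv (L + n - 1 - r) (by omega)
    beta_reduce at h
    rw [Finset.sum_range_succ, Finset.sum_eq_zero, zero_add, if_pos (by omega), han, one_smul,
      show L + n - 1 - (L + n - 1 - r) = r by omega] at h
    · exact h
    · intro k hk
      have hk' := Finset.mem_range.mp hk
      split_ifs with hlt
      · rw [ih (L + k - 1 - (L + n - 1 - r)) (by omega) (by omega), smul_zero]
      · rfl

lemma left_kernel_trivial {n m N L : ℕ}
    (A : Matrix (Fin n) (Fin n) ℝ) (B : Matrix (Fin n) (Fin m) ℝ)
    (hctrb : (ctrbMat A B).rank = n)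
    (ξ : Fin n → ℝ) (η : ℕ → Fin m → ℝ) (x : ℕ → Fin n → ℝ) (u : ℕ → Fin m → ℝ)
    (hx : ∀ j < N, x (j + 1) = A *ᵥ x j + B *ᵥ u j)
    (hann : ∀ j ≤ N, ξ ⬝ᵥ x j + ∑ l ∈ Finset.range L, η l ⬝ᵥ u (j + l) = 0)
    (hpe : ∀ v : ℕ → Fin m → ℝ,
      (∀ j, j + n ≤ N → ∑ l ∈ Finset.range (L + n), v l ⬝ᵥ u (j + l) = 0) →
      ∀ l < L + n, v l = 0) :
    ξ = 0 ∧ ∀ l < L, η l = 0 := by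
  have he := annSeq_eq_zero A B ξ η x u hx hann hpe
  constructor
  · apply eq_zero_of_vecMul_eq_zero_of_rank (ctrbMat A B) (by simpa using hctrb)
    ext ⟨k, i⟩
    have h := he (L + k) (by omega)
    rw [annSeq, if_neg (by omega), Nat.add_sub_cancel_left] at h
    exact congrFun h i
  · intro l hl
    have h := he (L - 1 - l) (by omega)
    rwa [annSeq, if_pos (by omega), show L - 1 - (L - 1 - l) = l by omega] at h

/-- A weighted sum `∑ g_j x(i + j)` of shifted states obeys the state equation driven by the same
weighted sum of shifted inputs; the matrices may equally be those of the output equation. -/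
lemma weighted_shift_eq {n m q M : ℕ} (A : Matrix (Fin q) (Fin n) ℝ) (B : Matrix (Fin q) (Fin m) ℝ)
    (g : Fin M → ℝ) (z : Fin M → Fin q → ℝ) (x : Fin M → Fin n → ℝ) (u : Fin M → Fin m → ℝ)
    (h : ∀ j, z j = A *ᵥ x j + B *ᵥ u j) :
    ∑ j, g j • z j = A *ᵥ (∑ j, g j • x j) + B *ᵥ (∑ j, g j • u j) := by
  simp only [h, Matrix.mulVec_sum, Matrix.mulVec_smul, smul_add, Finset.sum_add_distrib]

/-- The Hankel system `H_L(ω) g = w`, row block by row block, in terms of any extension `ω'` of `ω`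
to `ℕ`. -/
lemma hankel_mulVec_eq_iff {T L q : ℕ} (hLT : L ≤ T) (ω : Fin T → Fin q → ℝ)
    (ω' : ℕ → Fin q → ℝ) (hω : ∀ k : Fin T, ω' k = ω k) (g : Fin (T - L + 1) → ℝ)
    (w : Fin L → Fin q → ℝ) :
    (Hankel hLT ω).mulVec g = (fun ia : Fin L × Fin q => w ia.1 ia.2) ↔
      ∀ i : Fin L, ∑ j, g j • ω' (i + j) = w i := by
  have key : ∀ (i : Fin L) (a : Fin q),
      (Hankel hLT ω).mulVec g (i, a) = (∑ j, g j • ω' (i + j)) a := by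
    intro i a
    simp only [Matrix.mulVec, dotProduct, Hankel, Matrix.of_apply, Finset.sum_apply, Pi.smul_apply,
      smul_eq_mul]
    refine Finset.sum_congr rfl fun j _ => ?_
    rw [mul_comm, ← hω]
  constructor
  · intro h i
    ext a
    rw [← key, h]
  · intro h
    ext ⟨i, a⟩
    rw [key, h]

/-- Persistency of excitation as triviality of the left kernel, for an extension of the signal to
`ℕ`. -/
lemma hankel_left_kernel {T M q : ℕ} (hMT : M ≤ T) (ω : Fin T → Fin q → ℝ)
    (ω' : ℕ → Fin q → ℝ) (hω : ∀ k : Fin T, ω' k = ω k) (hr : (Hankel hMT ω).rank = q * M)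
    (v : ℕ → Fin q → ℝ)
    (hv : ∀ j, j + M ≤ T → ∑ l ∈ Finset.range M, v l ⬝ᵥ ω' (j + l) = 0) :
    ∀ l < M, v l = 0 := by
  have h := eq_zero_of_vecMul_eq_zero_of_rank (Hankel hMT ω) (by simp [hr, mul_comm])
    (fun ia => v ia.1 ia.2) (by
      ext j
      have h := hv j (by omega)
      rw [Finset.sum_range] at h
      simp only [Matrix.vecMul, dotProduct, Hankel, Matrix.of_apply, Pi.zero_apply,
        Fintype.sum_prod_type]
      rw [← h]
      refine Finset.sum_congr rfl fun l _ => Finset.sum_congr rfl fun a _ => ?_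
      rw [add_comm (j : ℕ), ← hω])
  intro l hl
  ext a
  exact congrFun h (⟨l, hl⟩, a)

/-- Any initial state and length-`L` input are reached by weighting the windows of the data. -/
lemma exists_weights {n m T L : ℕ} (hLnT : L + n ≤ T)
    (A : Matrix (Fin n) (Fin n) ℝ) (B : Matrix (Fin n) (Fin m) ℝ)
    (hctrb : (ctrbMat A B).rank = n) (ud : Fin T → Fin m → ℝ)
    (hpe : (Hankel hLnT ud).rank = m * (L + n))
    (x : ℕ → Fin n → ℝ) (u : ℕ → Fin m → ℝ) (hu : ∀ k : Fin T, u k = ud k)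
    (hx : ∀ j < T, x (j + 1) = A *ᵥ x j + B *ᵥ u j)
    (x₀ : Fin n → ℝ) (us : Fin L → Fin m → ℝ) :
    ∃ g : Fin (T - L + 1) → ℝ, ∑ j, g j • x j = x₀ ∧
      ∀ i : Fin L, ∑ j : Fin (T - L + 1), g j • u (i + j) = us i := by
  let M : Matrix (Fin n ⊕ Fin L × Fin m) (Fin (T - L + 1)) ℝ :=
    Matrix.of fun r j => Sum.elim (fun i => x j i) (fun ia => u (ia.1 + j) ia.2) r
  have hM : ∀ v, v ᵥ* M = 0 → v = 0 := by
    intro v hv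
    obtain ⟨h1, h2⟩ := left_kernel_trivial (N := T - L) (L := L) A B hctrb
      (fun i => v (Sum.inl i))
      (fun l a => if h : l < L then v (Sum.inr (⟨l, h⟩, a)) else 0) x u
      (fun j hj => hx j (by omega))
      (by
        intro j hj
        have h := congrFun hv ⟨j, by omega⟩
        simp only [M, Matrix.vecMul, dotProduct, Matrix.of_apply, Fintype.sum_sum_type,
          Sum.elim_inl, Sum.elim_inr, Fintype.sum_prod_type, Pi.zero_apply] at h
        rw [← h, Finset.sum_range]
        simp only [dotProduct, Fin.is_lt, dite_true, Fin.eta, add_comm j])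
      (fun w hw => hankel_left_kernel hLnT ud u hu hpe w fun j hj => hw j (by omega))
    ext r
    rcases r with i | ⟨l, a⟩
    · exact congrFun h1 i
    · have := congrFun (h2 l l.isLt) a
      simpa using this
  obtain ⟨g, hg⟩ := mulVec_surjective_of_left_kernel M hM
    (Sum.elim x₀ fun ia => us ia.1 ia.2)
  refine ⟨g, ?_, fun i => ?_⟩
  · ext a
    have := congrFun hg (Sum.inl a)
    simpa [M, Matrix.mulVec, dotProduct, Finset.sum_apply, mul_comm] using this
  · ext a
    have := congrFun hg (Sum.inr (i, a))
    simpa [M, Matrix.mulVec, dotProduct, Finset.sum_apply, mul_comm] using this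

/-- Willems' fundamental lemma. -/
theorem willems_fundamental_lemma
    {n m p T L : ℕ} (hL : 0 < L) (hLnT : L + n ≤ T)
    (A : Matrix (Fin n) (Fin n) ℝ) (B : Matrix (Fin n) (Fin m) ℝ)
    (C : Matrix (Fin p) (Fin n) ℝ) (D : Matrix (Fin p) (Fin m) ℝ)
    (hctrb : (ctrbMat A B).rank = n)
    (ud : Fin T → Fin m → ℝ) (yd : Fin T → Fin p → ℝ)
    (htraj : IsTrajectory A B C D ud yd)
    (hpe : (Hankel hLnT ud).rank = m * (L + n))
    (us : Fin L → Fin m → ℝ) (ys : Fin L → Fin p → ℝ) :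
    IsTrajectory A B C D us ys ↔
      ∃ g : Fin (T - L + 1) → ℝ,
        (Hankel (by omega : L ≤ T) ud).mulVec g = (fun ia : Fin L × Fin m => us ia.1 ia.2) ∧
        (Hankel (by omega : L ≤ T) yd).mulVec g = (fun ia : Fin L × Fin p => ys ia.1 ia.2) := by
  obtain ⟨xd, hxd⟩ := htraj
  -- Extend the data by zero to `ℕ`, so that shifted indices need no bound proofs.
  obtain ⟨x, hx⟩ : ∃ x : ℕ → Fin n → ℝ, ∀ k : Fin (T + 1), x k = xd k :=
    ⟨fun k => if h : k < T + 1 then xd ⟨k, h⟩ else 0, fun k => dif_pos k.isLt⟩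
  obtain ⟨u, hu⟩ : ∃ u : ℕ → Fin m → ℝ, ∀ k : Fin T, u k = ud k :=
    ⟨fun k => if h : k < T then ud ⟨k, h⟩ else 0, fun k => by simp⟩
  obtain ⟨y, hy⟩ : ∃ y : ℕ → Fin p → ℝ, ∀ k : Fin T, y k = yd k :=
    ⟨fun k => if h : k < T then yd ⟨k, h⟩ else 0, fun k => by simp⟩
  have hstate : ∀ k < T, x (k + 1) = A *ᵥ x k + B *ᵥ u k := by
    intro k hk
    have h := (hxd ⟨k, hk⟩).1
    rwa [← hx, ← hx, ← hu] at h
  have hout : ∀ k < T, y k = C *ᵥ x k + D *ᵥ u k := by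
    intro k hk
    have h := (hxd ⟨k, hk⟩).2
    rwa [← hx, ← hu, ← hy] at h
  simp only [hankel_mulVec_eq_iff _ ud u hu, hankel_mulVec_eq_iff _ yd y hy]
  have hstep : ∀ (g : Fin (T - L + 1) → ℝ), ∀ i < L,
      ∑ j, g j • x (i + 1 + j) = A *ᵥ (∑ j, g j • x (i + j)) + B *ᵥ (∑ j, g j • u (i + j)) := by
    intro g i hi
    refine weighted_shift_eq A B g _ _ _ fun j => ?_
    rw [← hstate _ (by omega), add_right_comm]
  have hobs : ∀ (g : Fin (T - L + 1) → ℝ), ∀ i < L,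
      ∑ j, g j • y (i + j) = C *ᵥ (∑ j, g j • x (i + j)) + D *ᵥ (∑ j, g j • u (i + j)) := by
    intro g i hi
    exact weighted_shift_eq C D g _ _ _ fun j => hout _ (by omega)
  constructor
  · rintro ⟨xs, hxs⟩
    obtain ⟨g, hg0, hgu⟩ := exists_weights hLnT A B hctrb ud hpe x u hu hstate (xs 0) us
    refine ⟨g, hgu, ?_⟩
    have hX : ∀ (i : ℕ) (hi : i < L + 1), ∑ j, g j • x (i + j) = xs ⟨i, hi⟩ := by
      intro i
      induction i with
      | zero => intro _; simpa using hg0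
      | succ i ih =>
        intro hi
        rw [hstep g i (by omega), ih (by omega), hgu ⟨i, by omega⟩]
        exact (hxs ⟨i, by omega⟩).1.symm
    intro i
    rw [hobs g i i.isLt, hX i (by omega), hgu i]
    exact (hxs i).2.symm
  · rintro ⟨g, hgu, hgy⟩
    refine ⟨fun i => ∑ j, g j • x (i + j), fun k => ⟨?_, ?_⟩⟩
    · rw [← hgu k]
      exact hstep g k k.isLt
    · rw [← hgu k, ← hgy k]
      exact hobs g k k.isLt
end
end

section
/- If T_ini is not smaller than the lag of the discrete-time LTI system x(k+1)=Ax(k)+Bu(k), y(k)=Cx(k)+Du(k), and (u, y) and (u, y′) are two length-(T_ini + N) trajectories of the system with the same input sequence u whose output sequences agree on the first T_ini time steps (y(k) = y′(k) for 0 ≤ k ≤ T_ini − 1), then the output sequences agree everywhere: y(k) = y′(k) for all 0 ≤ k ≤ T_ini + N − 1. -/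
/-!
Two trajectories with the same input have a state difference `e` obeying the autonomous recursion
`e (k+1) = A e k`, so `e k = A ^ k e 0` and the output difference at time `k` is `C A ^ k e 0`
(`IsTrajectory.exists_sub_eq`). Agreement of the outputs during the first `Tini ≥ ℓ` steps says
that `e 0` lies in the kernel of the depth-`ℓ` observability matrix. This matrix has full column
rank, so `e 0 = 0` (`eq_zero_of_obsMat_rank`) and all output differences vanish.
-/

open Matrix

noncomputable section

/-- Depth-`ℓ` observability matrix `col(C, CA, ..., CA^{ℓ-1})`. -/
def obsMat {n p : ℕ} (A : Matrix (Fin n) (Fin n) ℝ) (C : Matrix (Fin p) (Fin n) ℝ) (ℓ : ℕ) :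
    Matrix (Fin ℓ × Fin p) (Fin n) ℝ :=
  Matrix.of fun ki j => (C * A ^ (ki.1 : ℕ)) ki.2 j

/-- The output difference of two trajectories with a common input is the free response
`C A ^ k v` of the initial state difference `v`. -/
lemma IsTrajectory.exists_sub_eq {n m p T : ℕ}
    {A : Matrix (Fin n) (Fin n) ℝ} {B : Matrix (Fin n) (Fin m) ℝ}
    {C : Matrix (Fin p) (Fin n) ℝ} {D : Matrix (Fin p) (Fin m) ℝ}
    {u : Fin T → Fin m → ℝ} {y y' : Fin T → Fin p → ℝ}
    (h1 : IsTrajectory A B C D u y) (h2 : IsTrajectory A B C D u y') :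
    ∃ v : Fin n → ℝ, ∀ k : Fin T, y k - y' k = (C * A ^ (k : ℕ)).mulVec v := by
  obtain ⟨x, hx⟩ := h1
  obtain ⟨x', hx'⟩ := h2
  have key : ∀ k : Fin (T + 1), x k - x' k = (A ^ (k : ℕ)).mulVec (x 0 - x' 0) := by
    intro k
    induction k using Fin.induction with
    | zero => simp
    | succ k ih =>
      rw [(hx k).1, (hx' k).1, add_sub_add_right_eq_sub, ← Matrix.mulVec_sub, ih,
        Matrix.mulVec_mulVec, Fin.val_succ, Fin.val_castSucc, pow_succ']
  refine ⟨x 0 - x' 0, fun k => ?_⟩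
  rw [(hx k).2, (hx' k).2, add_sub_add_right_eq_sub, ← Matrix.mulVec_sub, key,
    Matrix.mulVec_mulVec, Fin.val_castSucc]

lemma eq_zero_of_obsMat_rank {n p ℓ : ℕ}
    {A : Matrix (Fin n) (Fin n) ℝ} {C : Matrix (Fin p) (Fin n) ℝ}
    (hrank : (obsMat A C ℓ).rank = n) {v : Fin n → ℝ}
    (hv : ∀ k < ℓ, (C * A ^ k).mulVec v = 0) : v = 0 := by
  have hdim := (obsMat A C ℓ).mulVecLin.finrank_range_add_finrank_ker
  rw [Matrix.rank] at hrank
  rw [hrank, Module.finrank_fin_fun] at hdim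
  have hker : LinearMap.ker (obsMat A C ℓ).mulVecLin = ⊥ :=
    Submodule.finrank_eq_zero.mp (by omega)
  have hmem : v ∈ LinearMap.ker (obsMat A C ℓ).mulVecLin := by
    rw [LinearMap.mem_ker, Matrix.mulVecLin_apply]
    ext ⟨k, i⟩
    exact congrFun (hv k k.isLt) i
  rwa [hker, Submodule.mem_bot] at hmem

/-- If `T_ini` is not smaller than the lag of the system (i.e. some `ℓ ≤ T_ini` makes the
observability matrix have rank `n`), then two length-`(T_ini + N)` trajectories with the same
input whose outputs agree on the first `T_ini` steps agree everywhere. -/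
theorem output_uniqueness
    {n m p Tini N : ℕ}
    (A : Matrix (Fin n) (Fin n) ℝ) (B : Matrix (Fin n) (Fin m) ℝ)
    (C : Matrix (Fin p) (Fin n) ℝ) (D : Matrix (Fin p) (Fin m) ℝ)
    (hlag : ∃ ℓ ≤ Tini, (obsMat A C ℓ).rank = n)
    (u : Fin (Tini + N) → Fin m → ℝ)
    (y y' : Fin (Tini + N) → Fin p → ℝ)
    (h1 : IsTrajectory A B C D u y) (h2 : IsTrajectory A B C D u y')
    (hini : ∀ k : Fin (Tini + N), (k : ℕ) < Tini → y k = y' k) :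
    ∀ k : Fin (Tini + N), y k = y' k := by
  obtain ⟨ℓ, hℓ, hrank⟩ := hlag
  obtain ⟨v, hv⟩ := h1.exists_sub_eq h2
  have hv0 : v = 0 := eq_zero_of_obsMat_rank hrank fun k hk => by
    rw [← hv ⟨k, by omega⟩, hini ⟨k, by omega⟩ (hk.trans_le hℓ), sub_self]
  intro k
  rw [← sub_eq_zero, hv k, hv0, Matrix.mulVec_zero]
end
end

section
/- Equivalence of Data-Driven-SPC and classical SPC (Theorem 1): Suppose H₁ has full row rank, and define H₁† := H₁ᵀ(H₁H₁ᵀ)⁻¹ and M := Y_F H₁† H₁. Consider: (i) the Data-Driven-SPC problem, minimizing f(u,y,σ) over (g,u,y,σ) ∈ ℝ^s × 𝒰 × 𝒴 × ℝ^{pT_ini} subject to H₁ g = w(u,σ) and M g = y; and (ii) the SPC problem, minimizing f(u,y,σ) over (u,y,σ) ∈ 𝒰 × 𝒴 × ℝ^{pT_ini} subject to y = Y_F H₁† w(u,σ). Then (u*, y*, σ*) is such that (g*, u*, y*, σ*) is a minimizer of (i) for some g* ∈ ℝ^s if and only if (u*, y*, σ*) is a minimizer of (ii); moreover, the optimal (u,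 y, σ) is unique whenever it exists. -/
/-! Full row rank makes `H₁ H₁ᵀ` invertible, so `H₁ H₁† = 1`. Every `w` is therefore of the form
`H₁ g` (take `g = H₁† w`), and whenever `H₁ g = w` the constraint `M g = y` reads
`y = Y_F H₁† w`. The two problems thus have the same feasible triples `(u, y, σ)` and the same cost.

Uniqueness is strict convexity of the cost in quantitative form: by the parallelogram law
(`cost_midpoint`), the cost at the midpoint of two minimizers is their common value minus a quarter
of the cost of their difference. The midpoint is feasible, so the cost of the difference is
nonpositive, which forces the difference to vanish (`eq_zero_of_cost_nonpos`). -/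

open Matrix

noncomputable section

/-- Vertical stacking `col(A, B)` of two matrices with the same column index. -/
def vstack {a b c : ℕ} (A : Matrix (Fin a) (Fin c) ℝ) (B : Matrix (Fin b) (Fin c) ℝ) :
    Matrix (Fin (a + b)) (Fin c) ℝ :=
  Matrix.of fun i j => Fin.append (fun i' => A i' j) (fun i' => B i' j) i

/-- `w(u, σ) = col(u_ini, y_ini + σ, u)`. -/
def wvec {mTini pTini mN : ℕ} (uini : Fin mTini → ℝ) (yini σ : Fin pTini → ℝ)
    (u : Fin mN → ℝ) : Fin (mTini + pTini + mN) → ℝ :=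
  Fin.append (Fin.append uini (yini + σ)) u

/-- The cost `f(u, y, σ) = uᵀRu + yᵀQy + λ_y ‖σ‖₂²`. -/
def cost {mN pN pTini : ℕ} (R : Matrix (Fin mN) (Fin mN) ℝ) (Q : Matrix (Fin pN) (Fin pN) ℝ)
    (lamy : ℝ) (u : Fin mN → ℝ) (y : Fin pN → ℝ) (σ : Fin pTini → ℝ) : ℝ :=
  u ⬝ᵥ R.mulVec u + y ⬝ᵥ Q.mulVec y + lamy * (σ ⬝ᵥ σ)

theorem mul_dagger_eq_one {a s : ℕ} (H : Matrix (Fin a) (Fin s) ℝ) (h : H.rank = a) :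
    H * (Hᵀ * (H * Hᵀ)⁻¹) = 1 := by
  have hr : (H * Hᵀ).rank = a := by rw [Matrix.rank_self_mul_transpose, h]
  have hsurj : Function.Surjective (H * Hᵀ).mulVec := by
    have ht : LinearMap.range (H * Hᵀ).mulVecLin = ⊤ := by
      apply Submodule.eq_top_of_finrank_eq
      rw [← Matrix.rank, hr]
      simp
    exact LinearMap.range_eq_top.mp ht
  have hu : IsUnit (H * Hᵀ) := Matrix.mulVec_surjective_iff_isUnit.mp hsurj
  rw [← Matrix.mul_assoc, Matrix.mul_nonsing_inv _ ((Matrix.isUnit_iff_isUnit_det _).mp hu)]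

theorem quad_midpoint {n : ℕ} (A : Matrix (Fin n) (Fin n) ℝ) (x y : Fin n → ℝ) :
    ((1 / 2 : ℝ) • x + (1 / 2 : ℝ) • y) ⬝ᵥ A.mulVec ((1 / 2 : ℝ) • x + (1 / 2 : ℝ) • y) =
      (x ⬝ᵥ A.mulVec x + y ⬝ᵥ A.mulVec y) / 2 - (x - y) ⬝ᵥ A.mulVec (x - y) / 4 := by
  simp only [Matrix.mulVec_add, Matrix.mulVec_sub, Matrix.mulVec_smul, dotProduct_add,
    add_dotProduct, dotProduct_sub, sub_dotProduct, dotProduct_smul, smul_dotProduct, smul_eq_mul]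
  ring

theorem cost_midpoint {a b c : ℕ} (R : Matrix (Fin a) (Fin a) ℝ) (Q : Matrix (Fin b) (Fin b) ℝ)
    (l : ℝ) (u₁ u₂ : Fin a → ℝ) (y₁ y₂ : Fin b → ℝ) (σ₁ σ₂ : Fin c → ℝ) :
    cost R Q l ((1 / 2 : ℝ) • u₁ + (1 / 2 : ℝ) • u₂) ((1 / 2 : ℝ) • y₁ + (1 / 2 : ℝ) • y₂)
        ((1 / 2 : ℝ) • σ₁ + (1 / 2 : ℝ) • σ₂) =
      (cost R Q l u₁ y₁ σ₁ + cost R Q l u₂ y₂ σ₂) / 2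
        - cost R Q l (u₁ - u₂) (y₁ - y₂) (σ₁ - σ₂) / 4 := by
  have h := quad_midpoint (1 : Matrix (Fin c) (Fin c) ℝ) σ₁ σ₂
  simp only [Matrix.one_mulVec] at h
  simp only [cost, quad_midpoint, h]
  ring

theorem eq_zero_of_quad_nonpos {n : ℕ} {A : Matrix (Fin n) (Fin n) ℝ} (hA : A.PosDef)
    {x : Fin n → ℝ} (hx : x ⬝ᵥ A.mulVec x ≤ 0) : x = 0 := by
  by_contra h
  have := hA.dotProduct_mulVec_pos h
  simp only [star_trivial] at this
  linarith

theorem quad_nonneg {n : ℕ} {A : Matrix (Fin n) (Fin n) ℝ} (hA : A.PosDef) (x : Fin n → ℝ) :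
    0 ≤ x ⬝ᵥ A.mulVec x := by
  simpa using hA.posSemidef.dotProduct_mulVec_nonneg x

theorem eq_zero_of_cost_nonpos {a b c : ℕ} {R : Matrix (Fin a) (Fin a) ℝ}
    {Q : Matrix (Fin b) (Fin b) ℝ} {l : ℝ} (hR : R.PosDef) (hQ : Q.PosDef) (hl : 0 < l)
    {u : Fin a → ℝ} {y : Fin b → ℝ} {σ : Fin c → ℝ} (h : cost R Q l u y σ ≤ 0) :
    u = 0 ∧ y = 0 ∧ σ = 0 := by
  have h1 := quad_nonneg hR u
  have h2 := quad_nonneg hQ y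
  have h3 : 0 ≤ σ ⬝ᵥ σ := by simpa using dotProduct_star_self_nonneg σ
  have h4 : 0 ≤ l * (σ ⬝ᵥ σ) := mul_nonneg hl.le h3
  unfold cost at h
  refine ⟨eq_zero_of_quad_nonpos hR (by linarith), eq_zero_of_quad_nonpos hQ (by linarith), ?_⟩
  have h5 : l * (σ ⬝ᵥ σ) = 0 := by linarith
  exact dotProduct_self_eq_zero.mp ((mul_eq_zero.mp h5).resolve_left hl.ne')

theorem wvec_midpoint {a b c : ℕ} (uini : Fin a → ℝ) (yini σ₁ σ₂ : Fin b → ℝ)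
    (u₁ u₂ : Fin c → ℝ) :
    wvec uini yini ((1 / 2 : ℝ) • σ₁ + (1 / 2 : ℝ) • σ₂) ((1 / 2 : ℝ) • u₁ + (1 / 2 : ℝ) • u₂) =
      (1 / 2 : ℝ) • wvec uini yini σ₁ u₁ + (1 / 2 : ℝ) • wvec uini yini σ₂ u₂ := by
  ext i
  refine Fin.addCases (fun i => ?_) (fun i => ?_) i
  · refine Fin.addCases (fun i => ?_) (fun i => ?_) i
    · simp [wvec]
      ring
    · simp [wvec]
      ring
  · simp [wvec]

/-- Equivalence of Data-Driven-SPC and classical SPC (Theorem 1). -/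
theorem dataDrivenSPC_eq_SPC
    {m p Tini N s : ℕ} (hm : 0 < m) (hp : 0 < p) (hTini : 0 < Tini) (hN : 0 < N) (hs : 0 < s)
    (UP : Matrix (Fin (m * Tini)) (Fin s) ℝ) (YP : Matrix (Fin (p * Tini)) (Fin s) ℝ)
    (UF : Matrix (Fin (m * N)) (Fin s) ℝ) (YF : Matrix (Fin (p * N)) (Fin s) ℝ)
    (H1 : Matrix (Fin (m * Tini + p * Tini + m * N)) (Fin s) ℝ)
    (hH1 : H1 = vstack (vstack UP YP) UF)
    (hrank : H1.rank = m * Tini + p * Tini + m * N)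
    (H1dag : Matrix (Fin s) (Fin (m * Tini + p * Tini + m * N)) ℝ)
    (hH1dag : H1dag = H1ᵀ * (H1 * H1ᵀ)⁻¹)
    (M : Matrix (Fin (p * N)) (Fin s) ℝ) (hM : M = YF * H1dag * H1)
    (uini : Fin (m * Tini) → ℝ) (yini : Fin (p * Tini) → ℝ)
    (R : Matrix (Fin (m * N)) (Fin (m * N)) ℝ) (Q : Matrix (Fin (p * N)) (Fin (p * N)) ℝ)
    (hR : R.PosDef) (hQ : Q.PosDef) (lamy : ℝ) (hlamy : 0 < lamy)
    (Uset : Set (Fin (m * N) → ℝ)) (Yset : Set (Fin (p * N) → ℝ))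
    (hU : Convex ℝ Uset) (hY : Convex ℝ Yset)
    (ustar : Fin (m * N) → ℝ) (ystar : Fin (p * N) → ℝ) (σstar : Fin (p * Tini) → ℝ) :
    -- (u*, y*, σ*) is part of a minimizer of Data-Driven-SPC iff it is a minimizer of SPC
    ((∃ g : Fin s → ℝ,
        (H1.mulVec g = wvec uini yini σstar ustar ∧ M.mulVec g = ystar ∧
          ustar ∈ Uset ∧ ystar ∈ Yset) ∧
        ∀ g' : Fin s → ℝ, ∀ u' : Fin (m * N) → ℝ, ∀ y' : Fin (p * N) → ℝ,
          ∀ σ' : Fin (p * Tini) → ℝ,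
          (H1.mulVec g' = wvec uini yini σ' u' ∧ M.mulVec g' = y' ∧
            u' ∈ Uset ∧ y' ∈ Yset) →
          cost R Q lamy ustar ystar σstar ≤ cost R Q lamy u' y' σ') ↔
      ((ystar = (YF * H1dag).mulVec (wvec uini yini σstar ustar) ∧
          ustar ∈ Uset ∧ ystar ∈ Yset) ∧
        ∀ u' : Fin (m * N) → ℝ, ∀ y' : Fin (p * N) → ℝ, ∀ σ' : Fin (p * Tini) → ℝ,
          (y' = (YF * H1dag).mulVec (wvec uini yini σ' u') ∧ u' ∈ Uset ∧ y' ∈ Yset) →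
          cost R Q lamy ustar ystar σstar ≤ cost R Q lamy u' y' σ')) ∧
    -- moreover, the optimal (u, y, σ) is unique whenever it exists
    (∀ u₁ y₁ σ₁ u₂ y₂ σ₂,
      ((y₁ = (YF * H1dag).mulVec (wvec uini yini σ₁ u₁) ∧ u₁ ∈ Uset ∧ y₁ ∈ Yset) ∧
        ∀ u' y' σ',
          (y' = (YF * H1dag).mulVec (wvec uini yini σ' u') ∧ u' ∈ Uset ∧ y' ∈ Yset) →
          cost R Q lamy u₁ y₁ σ₁ ≤ cost R Q lamy u' y' σ') →
      ((y₂ = (YF * H1dag).mulVec (wvec uini yini σ₂ u₂) ∧ u₂ ∈ Uset ∧ y₂ ∈ Yset) ∧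
        ∀ u' y' σ',
          (y' = (YF * H1dag).mulVec (wvec uini yini σ' u') ∧ u' ∈ Uset ∧ y' ∈ Yset) →
          cost R Q lamy u₂ y₂ σ₂ ≤ cost R Q lamy u' y' σ') →
      u₁ = u₂ ∧ y₁ = y₂ ∧ σ₁ = σ₂) := by
  have hone : H1 * H1dag = 1 := by rw [hH1dag]; exact mul_dagger_eq_one H1 hrank
  have hMg : ∀ g, M.mulVec g = (YF * H1dag).mulVec (H1.mulVec g) := fun g => by
    rw [hM, Matrix.mulVec_mulVec]
  have hlift : ∀ w, H1.mulVec (H1dag.mulVec w) = w := fun w => by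
    rw [Matrix.mulVec_mulVec, hone, Matrix.one_mulVec]
  refine ⟨⟨?_, ?_⟩, ?_⟩
  · rintro ⟨g, ⟨hg, hy, hu, hyY⟩, hmin⟩
    refine ⟨⟨by rw [← hg, ← hMg, hy], hu, hyY⟩, ?_⟩
    rintro u' y' σ' ⟨hy', hu', hyY'⟩
    exact hmin (H1dag.mulVec (wvec uini yini σ' u')) u' y' σ'
      ⟨hlift _, by rw [hMg, hlift, hy'], hu', hyY'⟩
  · rintro ⟨⟨hy, hu, hyY⟩, hmin⟩
    refine ⟨H1dag.mulVec (wvec uini yini σstar ustar),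
      ⟨hlift _, by rw [hMg, hlift, ← hy], hu, hyY⟩, ?_⟩
    rintro g' u' y' σ' ⟨hg', hy', hu', hyY'⟩
    exact hmin u' y' σ' ⟨by rw [← hg', ← hMg, hy'], hu', hyY'⟩
  · rintro u₁ y₁ σ₁ u₂ y₂ σ₂ ⟨⟨hy₁, hu₁, hY₁⟩, hmin₁⟩ ⟨⟨hy₂, hu₂, hY₂⟩, hmin₂⟩
    have hfeas : (1 / 2 : ℝ) • y₁ + (1 / 2 : ℝ) • y₂ = (YF * H1dag).mulVec
        (wvec uini yini ((1 / 2 : ℝ) • σ₁ + (1 / 2 : ℝ) • σ₂)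
          ((1 / 2 : ℝ) • u₁ + (1 / 2 : ℝ) • u₂)) := by
      rw [wvec_midpoint, Matrix.mulVec_add, Matrix.mulVec_smul, Matrix.mulVec_smul, ← hy₁, ← hy₂]
    have hUmid := hU hu₁ hu₂ (by norm_num : (0 : ℝ) ≤ 1 / 2) (by norm_num : (0 : ℝ) ≤ 1 / 2)
      (by norm_num)
    have hYmid := hY hY₁ hY₂ (by norm_num : (0 : ℝ) ≤ 1 / 2) (by norm_num : (0 : ℝ) ≤ 1 / 2)
      (by norm_num)
    have h₁ := hmin₁ _ _ _ ⟨hfeas, hUmid, hYmid⟩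
    have h₂ := hmin₂ _ _ _ ⟨hfeas, hUmid, hYmid⟩
    rw [cost_midpoint] at h₁ h₂
    obtain ⟨hu, hy, hσ⟩ := eq_zero_of_cost_nonpos hR hQ hlamy
      (by linarith : cost R Q lamy (u₁ - u₂) (y₁ - y₂) (σ₁ - σ₂) ≤ 0)
    exact ⟨sub_eq_zero.mp hu, sub_eq_zero.mp hy, sub_eq_zero.mp hσ⟩
end
end

section
/- Equivalence of DeePC-Hybrid and DeePC-SVD (Theorem 2): Suppose H = WΣVᵀ is a compact SVD, i.e. W ∈ ℝ^{q×r} with WᵀW = I_r, V ∈ ℝ^{s×r} with VᵀV = I_r, and Σ ∈ ℝ^{r×r} invertible. Set H̄ := WΣ, partitioned conformally with H into blocks Ū_P, Ȳ_P, Ū_F, Ȳ_F, with H̄₁ := col(Ū_P, Ȳ_P, Ū_F). Let P₁ be a Moore–Penrose pseudoinverse of H₁ and P̄₁ a Moore–Penrose pseudoinverse of H̄₁, and set Π₁ := P₁H₁, Π̄₁ := P̄₁H̄₁. Then for every λ₂ > 0 and λ_y > 0: (u*, y*, σ*) is such that (g*, u*, y*, σ*) minimizes f(u,y,σ) + λ₂‖(I_s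 − Π₁)g‖₂² over (g,u,y,σ) ∈ ℝ^s × 𝒰 × 𝒴 × ℝ^{pT_ini} subject to H g = v(u,y,σ), for some g*, if and only if (u*, y*, σ*) is such that (ḡ*, u*, y*, σ*) minimizes f(u,y,σ) + λ₂‖(I_r − Π̄₁)ḡ‖₂² over (ḡ,u,y,σ) ∈ ℝ^r × 𝒰 × 𝒴 × ℝ^{pT_ini} subject to H̄ ḡ = v(u,y,σ), for some ḡ*. -/
/-!
Since `H = H̄ Vᵀ`, also `H₁ = H̄₁ Vᵀ`, and both `P₁ H₁` and `V P̄₁ H̄₁ Vᵀ` are the orthogonal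
projector onto the row space of `H₁`, so `Π₁ = V Π̄₁ Vᵀ` (`projector_eq`). Consequently
`(I - Π₁) V = V (I - Π̄₁)` and `Vᵀ (I - Π₁) = (I - Π̄₁) Vᵀ`. As `V` is an isometry and `Vᵀ` is a
contraction, the lift `ḡ ↦ V ḡ` preserves the regularizer and the reduction `g ↦ Vᵀ g` does not
increase it. Both maps preserve feasibility without changing `(u, y, σ)`, so minimizers are
carried to minimizers in both directions.
-/

open Matrix

noncomputable section

/-- The submatrix of the first `a` rows of a matrix with `a + b` rows. -/
def topRows {a b c : ℕ} (A : Matrix (Fin (a + b)) (Fin c) ℝ) : Matrix (Fin a) (Fin c) ℝ :=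
  Matrix.of fun i j => A (Fin.castAdd b i) j

/-- `v(u, y, σ) = col(u_ini, y_ini + σ, u, y)`. -/
def vvec {mTini pTini mN pN : ℕ} (uini : Fin mTini → ℝ) (yini σ : Fin pTini → ℝ)
    (u : Fin mN → ℝ) (y : Fin pN → ℝ) : Fin (mTini + pTini + mN + pN) → ℝ :=
  Fin.append (wvec uini yini σ u) y

/-- `P` is a Moore–Penrose pseudoinverse of `A`. -/
def IsMPInv {k l : ℕ} (A : Matrix (Fin k) (Fin l) ℝ) (P : Matrix (Fin l) (Fin k) ℝ) : Prop :=
  A * P * A = A ∧ P * A * P = P ∧ (A * P)ᵀ = A * P ∧ (P * A)ᵀ = P * A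

/-- Symmetric matrices `P * A` and `P' * A` that both act as right identities on `A` coincide:
they are the orthogonal projector onto the row space of `A`. -/
lemma projector_eq {k l : ℕ} {A : Matrix (Fin k) (Fin l) ℝ} {P P' : Matrix (Fin l) (Fin k) ℝ}
    (h : A * (P * A) = A) (h' : A * (P' * A) = A)
    (hs : (P * A)ᵀ = P * A) (hs' : (P' * A)ᵀ = P' * A) : P * A = P' * A := by
  have e1 : (P * A) * (P' * A) = P * A := by rw [Matrix.mul_assoc, h']
  have e2 : (P' * A) * (P * A) = P' * A := by rw [Matrix.mul_assoc, h]
  calc P * A = ((P * A) * (P' * A))ᵀ := by rw [e1, hs]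
    _ = P' * A := by rw [Matrix.transpose_mul, hs, hs', e2]

lemma isometry_dotProduct {s r : ℕ} {V : Matrix (Fin s) (Fin r) ℝ} (hV : Vᵀ * V = 1)
    (x : Fin r → ℝ) : V *ᵥ x ⬝ᵥ V *ᵥ x = x ⬝ᵥ x := by
  rw [Matrix.dotProduct_mulVec, ← Matrix.mulVec_transpose, Matrix.mulVec_mulVec, hV,
    Matrix.one_mulVec]

/-- `Vᵀ` is a contraction, because `‖x‖² - ‖Vᵀx‖² = ‖x - V Vᵀ x‖²`. -/
lemma transpose_contraction {s r : ℕ} {V : Matrix (Fin s) (Fin r) ℝ} (hV : Vᵀ * V = 1)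
    (x : Fin s → ℝ) : Vᵀ *ᵥ x ⬝ᵥ Vᵀ *ᵥ x ≤ x ⬝ᵥ x := by
  have h0 : 0 ≤ (x - V *ᵥ (Vᵀ *ᵥ x)) ⬝ᵥ (x - V *ᵥ (Vᵀ *ᵥ x)) :=
    Finset.sum_nonneg fun i _ => mul_self_nonneg _
  have h1 : x ⬝ᵥ V *ᵥ (Vᵀ *ᵥ x) = Vᵀ *ᵥ x ⬝ᵥ Vᵀ *ᵥ x := by
    rw [Matrix.dotProduct_mulVec, ← Matrix.mulVec_transpose]
  rw [sub_dotProduct, dotProduct_sub, dotProduct_sub, isometry_dotProduct hV,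
    dotProduct_comm (V *ᵥ (Vᵀ *ᵥ x)) x, h1] at h0
  linarith

/-- Equivalence of DeePC-Hybrid and DeePC-SVD (Theorem 2). -/
theorem deePCHybrid_eq_deePCSVD
    {m p Tini N s r : ℕ} (hm : 0 < m) (hp : 0 < p) (hTini : 0 < Tini) (hN : 0 < N) (hs : 0 < s)
    (UP : Matrix (Fin (m * Tini)) (Fin s) ℝ) (YP : Matrix (Fin (p * Tini)) (Fin s) ℝ)
    (UF : Matrix (Fin (m * N)) (Fin s) ℝ) (YF : Matrix (Fin (p * N)) (Fin s) ℝ)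
    (H1 : Matrix (Fin (m * Tini + p * Tini + m * N)) (Fin s) ℝ)
    (hH1 : H1 = vstack (vstack UP YP) UF)
    (H : Matrix (Fin (m * Tini + p * Tini + m * N + p * N)) (Fin s) ℝ)
    (hH : H = vstack H1 YF)
    -- compact SVD of H
    (W : Matrix (Fin (m * Tini + p * Tini + m * N + p * N)) (Fin r) ℝ)
    (Sg : Matrix (Fin r) (Fin r) ℝ) (V : Matrix (Fin s) (Fin r) ℝ)
    (hW : Wᵀ * W = 1) (hV : Vᵀ * V = 1) (hSg : IsUnit Sg)
    (hSVD : H = W * Sg * Vᵀ)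
    -- H̄ = WΣ, partitioned conformally with H; H̄₁ is the stack of its first three blocks
    (Hbar : Matrix (Fin (m * Tini + p * Tini + m * N + p * N)) (Fin r) ℝ)
    (hHbar : Hbar = W * Sg)
    (Hbar1 : Matrix (Fin (m * Tini + p * Tini + m * N)) (Fin r) ℝ)
    (hHbar1 : Hbar1 = topRows Hbar)
    -- pseudoinverses and projectors
    (P1 : Matrix (Fin s) (Fin (m * Tini + p * Tini + m * N)) ℝ) (hP1 : IsMPInv H1 P1)
    (Pbar1 : Matrix (Fin r) (Fin (m * Tini + p * Tini + m * N)) ℝ) (hPbar1 : IsMPInv Hbar1 Pbar1)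
    (uini : Fin (m * Tini) → ℝ) (yini : Fin (p * Tini) → ℝ)
    (R : Matrix (Fin (m * N)) (Fin (m * N)) ℝ) (Q : Matrix (Fin (p * N)) (Fin (p * N)) ℝ)
    (hR : R.PosDef) (hQ : Q.PosDef)
    (Uset : Set (Fin (m * N) → ℝ)) (Yset : Set (Fin (p * N) → ℝ))
    (hU : Convex ℝ Uset) (hY : Convex ℝ Yset)
    (lamy lam2 : ℝ) (hlamy : 0 < lamy) (hlam2 : 0 < lam2)
    (ustar : Fin (m * N) → ℝ) (ystar : Fin (p * N) → ℝ) (σstar : Fin (p * Tini) → ℝ) :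
    -- (u*, y*, σ*) is part of a minimizer of DeePC-Hybrid iff it is part of a minimizer of
    -- DeePC-SVD
    (∃ g : Fin s → ℝ,
        (H.mulVec g = vvec uini yini σstar ustar ystar ∧ ustar ∈ Uset ∧ ystar ∈ Yset) ∧
        ∀ g' : Fin s → ℝ, ∀ u' : Fin (m * N) → ℝ, ∀ y' : Fin (p * N) → ℝ,
          ∀ σ' : Fin (p * Tini) → ℝ,
          (H.mulVec g' = vvec uini yini σ' u' y' ∧ u' ∈ Uset ∧ y' ∈ Yset) →
          cost R Q lamy ustar ystar σstar +
              lam2 * (((1 - P1 * H1).mulVec g) ⬝ᵥ ((1 - P1 * H1).mulVec g)) ≤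
            cost R Q lamy u' y' σ' +
              lam2 * (((1 - P1 * H1).mulVec g') ⬝ᵥ ((1 - P1 * H1).mulVec g'))) ↔
    (∃ gbar : Fin r → ℝ,
        (Hbar.mulVec gbar = vvec uini yini σstar ustar ystar ∧ ustar ∈ Uset ∧ ystar ∈ Yset) ∧
        ∀ gbar' : Fin r → ℝ, ∀ u' : Fin (m * N) → ℝ, ∀ y' : Fin (p * N) → ℝ,
          ∀ σ' : Fin (p * Tini) → ℝ,
          (Hbar.mulVec gbar' = vvec uini yini σ' u' y' ∧ u' ∈ Uset ∧ y' ∈ Yset) →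
          cost R Q lamy ustar ystar σstar +
              lam2 * (((1 - Pbar1 * Hbar1).mulVec gbar) ⬝ᵥ ((1 - Pbar1 * Hbar1).mulVec gbar)) ≤
            cost R Q lamy u' y' σ' +
              lam2 * (((1 - Pbar1 * Hbar1).mulVec gbar') ⬝ᵥ
                ((1 - Pbar1 * Hbar1).mulVec gbar'))) := by
  have hHV : H = Hbar * Vᵀ := by rw [hSVD, hHbar]
  have hH1V : H1 = Hbar1 * Vᵀ := by
    ext i j
    have := congrFun (congrFun (hH.symm.trans hHV) (Fin.castAdd _ i)) j
    simpa [vstack, hHbar1, topRows, Matrix.mul_apply] using this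
  obtain ⟨a1, -, -, a4⟩ := hP1
  obtain ⟨b1, -, -, b4⟩ := hPbar1
  have hPi : P1 * H1 = V * (Pbar1 * Hbar1) * Vᵀ := by
    have e : (V * Pbar1) * H1 = V * (Pbar1 * Hbar1) * Vᵀ := by
      rw [hH1V]; simp only [Matrix.mul_assoc]
    rw [← e]
    refine projector_eq (by rw [← Matrix.mul_assoc, a1]) ?_ a4 ?_
    · rw [e, hH1V]
      calc Hbar1 * Vᵀ * (V * (Pbar1 * Hbar1) * Vᵀ)
          = Hbar1 * (Vᵀ * V) * Pbar1 * Hbar1 * Vᵀ := by simp only [Matrix.mul_assoc]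
        _ = Hbar1 * Vᵀ := by rw [hV, Matrix.mul_one, b1]
    · rw [e, Matrix.transpose_mul, Matrix.transpose_mul, b4, Matrix.transpose_transpose]
      simp only [Matrix.mul_assoc]
  have hL : (1 - P1 * H1) * V = V * (1 - Pbar1 * Hbar1) := by
    rw [hPi, Matrix.sub_mul, Matrix.mul_sub, Matrix.mul_assoc _ Vᵀ V, hV]; simp
  have hRt : Vᵀ * (1 - P1 * H1) = (1 - Pbar1 * Hbar1) * Vᵀ := by
    rw [hPi, Matrix.sub_mul, Matrix.mul_sub, ← Matrix.mul_assoc Vᵀ, ← Matrix.mul_assoc Vᵀ, hV]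
    simp
  have hLift : ∀ x : Fin r → ℝ,
      (1 - P1 * H1) *ᵥ (V *ᵥ x) ⬝ᵥ (1 - P1 * H1) *ᵥ (V *ᵥ x) =
        (1 - Pbar1 * Hbar1) *ᵥ x ⬝ᵥ (1 - Pbar1 * Hbar1) *ᵥ x := fun x => by
    rw [Matrix.mulVec_mulVec, hL, ← Matrix.mulVec_mulVec, isometry_dotProduct hV]
  have hRed : ∀ x : Fin s → ℝ,
      (1 - Pbar1 * Hbar1) *ᵥ (Vᵀ *ᵥ x) ⬝ᵥ (1 - Pbar1 * Hbar1) *ᵥ (Vᵀ *ᵥ x) ≤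
        (1 - P1 * H1) *ᵥ x ⬝ᵥ (1 - P1 * H1) *ᵥ x := fun x => by
    rw [Matrix.mulVec_mulVec, ← hRt, ← Matrix.mulVec_mulVec]
    exact transpose_contraction hV _
  have hFeasLift : ∀ x : Fin r → ℝ, H *ᵥ (V *ᵥ x) = Hbar *ᵥ x := fun x => by
    rw [Matrix.mulVec_mulVec, hHV, Matrix.mul_assoc, hV, Matrix.mul_one]
  have hFeasRed : ∀ x : Fin s → ℝ, Hbar *ᵥ (Vᵀ *ᵥ x) = H *ᵥ x := fun x => by
    rw [Matrix.mulVec_mulVec, hHV]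
  constructor
  · rintro ⟨g, ⟨hg, hu, hy⟩, hmin⟩
    refine ⟨Vᵀ *ᵥ g, ⟨(hFeasRed g).trans hg, hu, hy⟩, fun g' u' y' σ' ⟨hg', hu', hy'⟩ => ?_⟩
    have h := hmin (V *ᵥ g') u' y' σ' ⟨(hFeasLift g').trans hg', hu', hy'⟩
    rw [hLift] at h
    have := mul_le_mul_of_nonneg_left (hRed g) hlam2.le
    linarith
  · rintro ⟨g, ⟨hg, hu, hy⟩, hmin⟩
    refine ⟨V *ᵥ g, ⟨(hFeasLift g).trans hg, hu, hy⟩, fun g' u' y' σ' ⟨hg', hu', hy'⟩ => ?_⟩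
    have h := hmin (Vᵀ *ᵥ g') u' y' σ' ⟨(hFeasRed g').trans hg', hu', hy'⟩
    rw [hLift]
    have := mul_le_mul_of_nonneg_left (hRed g') hlam2.le
    linarith
end
end

section
/- Orthogonal splitting of the regularizer (key step in Proposition 1): Suppose H = WΣVᵀ with W ∈ ℝ^{q×r}, WᵀW = I_r, V ∈ ℝ^{s×r}, VᵀV = I_r, and Σ ∈ ℝ^{r×r} invertible, and define H† := V Σ⁻¹ Wᵀ. Let G ∈ ℝ^{m_g×s} satisfy rowspace(H GᵀG) ⊆ rowspace(H), and let ĝ ∈ ℝ^s satisfy H ĝ = 0. Then for every v ∈ ℝ^q: ‖G(H†v + ĝ)‖₂² = ‖G H†v‖₂² + ‖G ĝ‖₂². -/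
/-!
The vector `H†v` lies in the row space of `H`, say `H†v = Hᵀy`. Hence
`⟪G H†v, G ĝ⟫ = ⟪(H GᵀG)ᵀ y, ĝ⟫`, and the hypothesis on row spaces rewrites `(H GᵀG)ᵀ y` as `Hᵀz`,
so the cross term equals `⟪z, H ĝ⟫ = 0`.
-/

open Matrix

noncomputable section

/-- The row space of a matrix: the range of `x ↦ Aᵀ x`. -/
def rowSpace {a b : ℕ} (A : Matrix (Fin a) (Fin b) ℝ) : Submodule ℝ (Fin b → ℝ) :=
  LinearMap.range Aᵀ.mulVecLin

/-- Orthogonal splitting of the regularizer (key step in Proposition 1). -/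
theorem regularizer_orthogonal_splitting
    {q s r mg : ℕ}
    (W : Matrix (Fin q) (Fin r) ℝ) (Sg : Matrix (Fin r) (Fin r) ℝ)
    (V : Matrix (Fin s) (Fin r) ℝ)
    (hW : Wᵀ * W = 1) (hV : Vᵀ * V = 1) (hSg : IsUnit Sg)
    (H : Matrix (Fin q) (Fin s) ℝ) (hH : H = W * Sg * Vᵀ)
    (Hdag : Matrix (Fin s) (Fin q) ℝ) (hHdag : Hdag = V * Sg⁻¹ * Wᵀ)
    (G : Matrix (Fin mg) (Fin s) ℝ)
    (hrow : rowSpace (H * Gᵀ * G) ≤ rowSpace H)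
    (ghat : Fin s → ℝ) (hghat : H.mulVec ghat = 0) :
    ∀ v : Fin q → ℝ,
      (G.mulVec (Hdag.mulVec v + ghat)) ⬝ᵥ (G.mulVec (Hdag.mulVec v + ghat)) =
        (G.mulVec (Hdag.mulVec v)) ⬝ᵥ (G.mulVec (Hdag.mulVec v)) +
          (G.mulVec ghat) ⬝ᵥ (G.mulVec ghat) := by
  intro v
  -- `H†v = Hᵀ y` for `y = W Σ⁻ᵀ Σ⁻¹ Wᵀ v`, since `Hᵀ W Σ⁻ᵀ = V`.
  have hdet : IsUnit Sgᵀ.det := by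
    rw [det_transpose]
    exact (isUnit_iff_isUnit_det Sg).mp hSg
  have hfac : Hdag = Hᵀ * (W * Sgᵀ⁻¹ * Sg⁻¹ * Wᵀ) := by
    have hVeq : Hᵀ * W * Sgᵀ⁻¹ = V := by
      rw [hH, transpose_mul, transpose_mul, transpose_transpose, Matrix.mul_assoc V,
        Matrix.mul_assoc Sgᵀ, hW, Matrix.mul_one, Matrix.mul_assoc, mul_nonsing_inv _ hdet,
        Matrix.mul_one]
    rw [hHdag]
    nth_rewrite 1 [← hVeq]
    simp only [Matrix.mul_assoc]
  obtain ⟨y, hy⟩ : ∃ y, Hdag *ᵥ v = Hᵀ *ᵥ y :=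
    ⟨(W * Sgᵀ⁻¹ * Sg⁻¹ * Wᵀ) *ᵥ v, by rw [mulVec_mulVec, ← hfac]⟩
  obtain ⟨z, hz⟩ : ∃ z, Hᵀ *ᵥ z = (H * Gᵀ * G)ᵀ *ᵥ y := hrow ⟨y, rfl⟩
  have hcross : (G *ᵥ (Hdag *ᵥ v)) ⬝ᵥ (G *ᵥ ghat) = 0 := by
    calc (G *ᵥ (Hdag *ᵥ v)) ⬝ᵥ (G *ᵥ ghat)
        = ((H * Gᵀ * G)ᵀ *ᵥ y) ⬝ᵥ ghat := by
          rw [hy, dotProduct_mulVec, ← mulVec_transpose, mulVec_mulVec, mulVec_mulVec]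
          simp only [transpose_mul, transpose_transpose, Matrix.mul_assoc]
      _ = z ⬝ᵥ (H *ᵥ ghat) := by rw [← hz, mulVec_transpose, dotProduct_mulVec]
      _ = 0 := by rw [hghat, dotProduct_zero]
  rw [mulVec_add, add_dotProduct, dotProduct_add, dotProduct_add, hcross,
    dotProduct_comm (G *ᵥ ghat) (G *ᵥ (Hdag *ᵥ v)), hcross]
  ring
end
end

section
/- Equivalence of the constrained DeePC problem and Data-Driven-SPC (core of Theorem 3): Let P₁ be a Moore–Penrose pseudoinverse of H₁, and set Π₁ := P₁H₁ and M := Y_F Π₁. Then (u*, y*, σ*) is such that (g*, u*, y*, σ*) minimizes f(u,y,σ) over (g,u,y,σ) ∈ ℝ^s × 𝒰 × 𝒴 × ℝ^{pT_ini} subject to H g = v(u,y,σ) and (I_s − Π₁)g = 0, for some g*, if and only if (u*, y*, σ*) is such that (g̃*, u*, y*, σ*) minimizes f(u,y,σ) over (g,u,y,σ) ∈ ℝ^s × 𝒰 × 𝒴 × ℝ^{pT_ini} subject to H₁ g = w(u,σ) and M g = y, for some g̃*. -/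
/-!
The cost does not involve `g`, so each problem only depends on the set of triples `(u, y, σ)` that
are feasible for some `g`. These two sets coincide (`exists_constrained_iff`): on the range of the
projection `P₁ H₁` the matrices `Y_F` and `M = Y_F P₁ H₁` agree, and replacing `g` by `P₁ H₁ g`
changes neither `H₁ g` nor `M g`. Equal feasible sets give equal minimizers.
-/

open Matrix

noncomputable section

theorem vstack_mulVec {a b c : ℕ} (A : Matrix (Fin a) (Fin c) ℝ) (B : Matrix (Fin b) (Fin c) ℝ)
    (g : Fin c → ℝ) :
    (vstack A B).mulVec g = Fin.append (A.mulVec g) (B.mulVec g) := by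
  funext i
  refine Fin.addCases (fun i => ?_) (fun i => ?_) i <;>
    simp [vstack, Matrix.mulVec, dotProduct]

theorem append_eq_append_iff {a b : ℕ} (x x' : Fin a → ℝ) (y y' : Fin b → ℝ) :
    Fin.append x y = Fin.append x' y' ↔ x = x' ∧ y = y' := by
  refine ⟨fun h => ⟨funext fun i => ?_, funext fun i => ?_⟩, fun h => by rw [h.1, h.2]⟩
  · simpa using congrFun h (Fin.castAdd b i)
  · simpa using congrFun h (Fin.natAdd a i)

/-- The two feasible sets have the same projection onto the variables other than `g`. From left to
right the same `g` works, since `P * A * g = g`; from right to left, replace `g` by its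
projection `P * A * g`, which has the same image under `A` because `A * P * A = A`. -/
theorem exists_constrained_iff {k l n : ℕ} {A : Matrix (Fin k) (Fin l) ℝ}
    {P : Matrix (Fin l) (Fin k) ℝ} (hAPA : A * P * A = A) (B : Matrix (Fin n) (Fin l) ℝ)
    (w : Fin k → ℝ) (y : Fin n → ℝ) :
    (∃ g, (vstack A B).mulVec g = Fin.append w y ∧ (1 - P * A).mulVec g = 0) ↔
      ∃ g, A.mulVec g = w ∧ (B * (P * A)).mulVec g = y := by
  simp only [vstack_mulVec, append_eq_append_iff]
  constructor
  · rintro ⟨g, ⟨hA, hB⟩, hg⟩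
    rw [Matrix.sub_mulVec, Matrix.one_mulVec, sub_eq_zero] at hg
    exact ⟨g, hA, by rw [← Matrix.mulVec_mulVec, ← hg, hB]⟩
  · rintro ⟨g, hA, hB⟩
    refine ⟨(P * A).mulVec g, ⟨?_, ?_⟩, ?_⟩
    · rw [Matrix.mulVec_mulVec, ← Matrix.mul_assoc, hAPA, hA]
    · rw [Matrix.mulVec_mulVec, hB]
    · rw [Matrix.mulVec_mulVec, Matrix.sub_mul, Matrix.one_mul, Matrix.mul_assoc P A,
        ← Matrix.mul_assoc A P, hAPA, sub_self, Matrix.zero_mulVec]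

/-- Equivalence of the constrained DeePC problem and Data-Driven-SPC (core of Theorem 3). -/
theorem constrainedDeePC_eq_dataDrivenSPC
    {m p Tini N s : ℕ} (hm : 0 < m) (hp : 0 < p) (hTini : 0 < Tini) (hN : 0 < N) (hs : 0 < s)
    (UP : Matrix (Fin (m * Tini)) (Fin s) ℝ) (YP : Matrix (Fin (p * Tini)) (Fin s) ℝ)
    (UF : Matrix (Fin (m * N)) (Fin s) ℝ) (YF : Matrix (Fin (p * N)) (Fin s) ℝ)
    (H1 : Matrix (Fin (m * Tini + p * Tini + m * N)) (Fin s) ℝ)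
    (hH1 : H1 = vstack (vstack UP YP) UF)
    (H : Matrix (Fin (m * Tini + p * Tini + m * N + p * N)) (Fin s) ℝ)
    (hH : H = vstack H1 YF)
    (P1 : Matrix (Fin s) (Fin (m * Tini + p * Tini + m * N)) ℝ) (hP1 : IsMPInv H1 P1)
    (M : Matrix (Fin (p * N)) (Fin s) ℝ) (hM : M = YF * (P1 * H1))
    (uini : Fin (m * Tini) → ℝ) (yini : Fin (p * Tini) → ℝ)
    (R : Matrix (Fin (m * N)) (Fin (m * N)) ℝ) (Q : Matrix (Fin (p * N)) (Fin (p * N)) ℝ)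
    (hR : R.PosDef) (hQ : Q.PosDef) (lamy : ℝ) (hlamy : 0 < lamy)
    (Uset : Set (Fin (m * N) → ℝ)) (Yset : Set (Fin (p * N) → ℝ))
    (hU : Convex ℝ Uset) (hY : Convex ℝ Yset)
    (ustar : Fin (m * N) → ℝ) (ystar : Fin (p * N) → ℝ) (σstar : Fin (p * Tini) → ℝ) :
    (∃ g : Fin s → ℝ,
        (H.mulVec g = vvec uini yini σstar ustar ystar ∧ (1 - P1 * H1).mulVec g = 0 ∧
          ustar ∈ Uset ∧ ystar ∈ Yset) ∧
        ∀ g' : Fin s → ℝ, ∀ u' : Fin (m * N) → ℝ, ∀ y' : Fin (p * N) → ℝ,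
          ∀ σ' : Fin (p * Tini) → ℝ,
          (H.mulVec g' = vvec uini yini σ' u' y' ∧ (1 - P1 * H1).mulVec g' = 0 ∧
            u' ∈ Uset ∧ y' ∈ Yset) →
          cost R Q lamy ustar ystar σstar ≤ cost R Q lamy u' y' σ') ↔
    (∃ g : Fin s → ℝ,
        (H1.mulVec g = wvec uini yini σstar ustar ∧ M.mulVec g = ystar ∧
          ustar ∈ Uset ∧ ystar ∈ Yset) ∧
        ∀ g' : Fin s → ℝ, ∀ u' : Fin (m * N) → ℝ, ∀ y' : Fin (p * N) → ℝ,
          ∀ σ' : Fin (p * Tini) → ℝ,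
          (H1.mulVec g' = wvec uini yini σ' u' ∧ M.mulVec g' = y' ∧
            u' ∈ Uset ∧ y' ∈ Yset) →
          cost R Q lamy ustar ystar σstar ≤ cost R Q lamy u' y' σ') := by
  subst hH hM
  have key : ∀ u y σ,
      (∃ g, (vstack H1 YF).mulVec g = vvec uini yini σ u y ∧ (1 - P1 * H1).mulVec g = 0) ↔
        ∃ g, H1.mulVec g = wvec uini yini σ u ∧ (YF * (P1 * H1)).mulVec g = y :=
    fun u y σ => exists_constrained_iff hP1.1 YF (wvec uini yini σ u) y
  constructor
  · rintro ⟨g, ⟨h1, h2, hu, hy⟩, hmin⟩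
    obtain ⟨g₀, h1', h2'⟩ := (key _ _ _).1 ⟨g, h1, h2⟩
    refine ⟨g₀, ⟨h1', h2', hu, hy⟩, ?_⟩
    rintro g' u' y' σ' ⟨k1, k2, ku, ky⟩
    obtain ⟨g₁, k1', k2'⟩ := (key _ _ _).2 ⟨g', k1, k2⟩
    exact hmin g₁ u' y' σ' ⟨k1', k2', ku, ky⟩
  · rintro ⟨g, ⟨h1, h2, hu, hy⟩, hmin⟩
    obtain ⟨g₀, h1', h2'⟩ := (key _ _ _).2 ⟨g, h1, h2⟩
    refine ⟨g₀, ⟨h1', h2', hu, hy⟩, ?_⟩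
    rintro g' u' y' σ' ⟨k1, k2, ku, ky⟩
    obtain ⟨g₁, k1', k2'⟩ := (key _ _ _).1 ⟨g', k1, k2⟩
    exact hmin g₁ u' y' σ' ⟨k1', k2', ku, ky⟩
end
end
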